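/- Let E, F be Banach spaces, n ≥ 2 and 0 < p < ∞. Every p-semi-integral continuous n-linear map T : E × ⋯ × E → F is fully (multiple) p-summing, with ‖T‖_{fas,p} ≤ ‖T‖_{si,p}: for every m ∈ ℕ and all finite families x_j^{(k)} ∈ E, (∑_{j_1, …, j_n = 1}^m ‖T(x_{j_1}^{(1)}, …, x_{j_n}^{(n)})‖^p)^{1/p} ≤ ‖T‖_{si,p} ∏_{k=1}^n ‖(x_j^{(k)})_{j=1}^m‖_{w,p}. -/

import Mathlib

open MeasureTheory

/-- Weak `ℓ_q` norm of a finite family in a normed space. -/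
noncomputable def weakLpNorm (𝕜 : Type*) [RCLike 𝕜] {E : Type*} [NormedAddCommGroup E]
    [NormedSpace 𝕜 E] (q : ℝ) {m : ℕ} (x : Fin m → E) : ℝ :=
  ⨆ φ : {φ : E →L[𝕜] 𝕜 // ‖φ‖ ≤ 1}, (∑ j, ‖φ.1 (x j)‖ ^ q) ^ (1 / q)

/-- `T` satisfies the `p`-semi-integral inequality with constant `C`, witnessed by a regular
Borel probability measure on the product of the closed dual unit balls with their
weak-star topologies. -/
def SemiIntegralWith (𝕜 : Type*) [RCLike 𝕜] {ι : Type*} [Fintype ι] {E : ι → Type*}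
    [∀ i, NormedAddCommGroup (E i)] [∀ i, NormedSpace 𝕜 (E i)]
    {F : Type*} [NormedAddCommGroup F]
    (p C : ℝ) (T : (∀ i, E i) → F) : Prop :=
  letI : MeasurableSpace (∀ i, {φ : WeakDual 𝕜 (E i) // ∀ z, ‖φ z‖ ≤ ‖z‖}) := borel _
  ∃ μ : Measure (∀ i, {φ : WeakDual 𝕜 (E i) // ∀ z, ‖φ z‖ ≤ ‖z‖}),
    IsProbabilityMeasure μ ∧ μ.Regular ∧
      ∀ x : ∀ i, E i,
        ‖T x‖ ≤ C * (∫ φ, ∏ i, ‖(φ i).1 (x i)‖ ^ p ∂μ) ^ (1 / p)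

/-- The `si,p` norm: infimum of admissible constants. -/
noncomputable def siNorm (𝕜 : Type*) [RCLike 𝕜] {ι : Type*} [Fintype ι] {E : ι → Type*}
    [∀ i, NormedAddCommGroup (E i)] [∀ i, NormedSpace 𝕜 (E i)]
    {F : Type*} [NormedAddCommGroup F]
    (p : ℝ) (T : (∀ i, E i) → F) : ℝ :=
  sInf {C : ℝ | 0 ≤ C ∧ SemiIntegralWith 𝕜 p C T}

/-- `T` is absolutely `(p; q₁,…,qₙ)`-summing with constant `C`. -/
def AbsSummingWith (𝕜 : Type*) [RCLike 𝕜] {ι : Type*} [Fintype ι] {E : ι → Type*}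
    [∀ i, NormedAddCommGroup (E i)] [∀ i, NormedSpace 𝕜 (E i)]
    {F : Type*} [NormedAddCommGroup F]
    (p : ℝ) (q : ι → ℝ) (C : ℝ) (T : (∀ i, E i) → F) : Prop :=
  ∀ (m : ℕ) (x : ∀ i, Fin m → E i),
    (∑ j, ‖T (fun i => x i j)‖ ^ p) ^ (1 / p) ≤ C * ∏ i, weakLpNorm 𝕜 (q i) (x i)

/-- `T` is `p`-dominated with constant `C`, witnessed by regular Borel probability measures
on the closed dual unit balls with their weak-star topologies. -/
def DominatedWith (𝕜 : Type*) [RCLike 𝕜] {ι : Type*} [Fintype ι] {E : ι → Type*}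
    [∀ i, NormedAddCommGroup (E i)] [∀ i, NormedSpace 𝕜 (E i)]
    {F : Type*} [NormedAddCommGroup F]
    (p C : ℝ) (T : (∀ i, E i) → F) : Prop :=
  letI : ∀ i, MeasurableSpace {φ : WeakDual 𝕜 (E i) // ∀ z, ‖φ z‖ ≤ ‖z‖} := fun i => borel _
  ∃ μ : ∀ i, Measure {φ : WeakDual 𝕜 (E i) // ∀ z, ‖φ z‖ ≤ ‖z‖},
    (∀ i, IsProbabilityMeasure (μ i)) ∧ (∀ i, (μ i).Regular) ∧
      ∀ x : ∀ i, E i,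
        ‖T x‖ ≤ C * ∏ i, (∫ φ, ‖φ.1 (x i)‖ ^ p ∂(μ i)) ^ (1 / p)

/-- `E` is an `𝓛_∞`-space. -/
def IsLinftySpace (𝕜 : Type*) [RCLike 𝕜] (E : Type*) [NormedAddCommGroup E]
    [NormedSpace 𝕜 E] : Prop :=
  ∃ lam : ℝ, 1 ≤ lam ∧ ∀ M : Submodule 𝕜 E, FiniteDimensional 𝕜 M →
    ∃ N : Submodule 𝕜 E, M ≤ N ∧ FiniteDimensional 𝕜 N ∧
      ∃ v : N ≃L[𝕜] (Fin (Module.finrank 𝕜 N) → 𝕜),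
        ‖(v : N →L[𝕜] (Fin (Module.finrank 𝕜 N) → 𝕜))‖ *
          ‖(v.symm : (Fin (Module.finrank 𝕜 N) → 𝕜) →L[𝕜] N)‖ ≤ lam

/-- `F` has cotype `q`. -/
def HasCotype (q : ℝ) (F : Type*) [NormedAddCommGroup F] : Prop :=
  ∃ C : ℝ, 0 ≤ C ∧ ∀ (m : ℕ) (x : Fin m → F),
    (∑ j, ‖x j‖ ^ q) ^ (1 / q) ≤
      C * ((∑ ε : Fin m → Bool, ‖∑ j, (if ε j then x j else -x j)‖ ^ (2 : ℝ)) / 2 ^ m)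
        ^ ((1 : ℝ) / 2)

/-!
Raise the semi-integral inequality to the power `p` and sum it over all multi-indices: the sum moves
inside the integral, where `∑ j, ∏ i, ‖φ i (x i (j i))‖ ^ p` factors as
`∏ i, ∑ k, ‖φ i (x i k)‖ ^ p`. Each factor is at most `weakLpNorm 𝕜 p (x i) ^ p`, and a bound
uniform in `φ` survives integration against a probability measure. Finally pass to the infimum over
the admissible constants.
-/

/-- The closed unit ball of the dual of `E` with its weak-star topology, encoded by the pointwise
bound `‖φ z‖ ≤ ‖z‖`; a reducible name for the factors of the space carrying the measure in
`SemiIntegralWith`. -/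
abbrev WeakDualUnitBall (𝕜 : Type*) [RCLike 𝕜] (E : Type*) [NormedAddCommGroup E]
    [NormedSpace 𝕜 E] : Type _ :=
  {φ : WeakDual 𝕜 E // ∀ z, ‖φ z‖ ≤ ‖z‖}

/-- `T` is fully (multiple) `p`-summing with constant `C`. The families in the different variables
may have different lengths. -/
def FullySummingWith (𝕜 : Type*) [RCLike 𝕜] {ι : Type*} [Fintype ι] [DecidableEq ι]
    {E : ι → Type*} [∀ i, NormedAddCommGroup (E i)] [∀ i, NormedSpace 𝕜 (E i)]
    {F : Type*} [NormedAddCommGroup F] (p C : ℝ) (T : (∀ i, E i) → F) : Prop :=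
  ∀ (m : ι → ℕ) (x : ∀ i, Fin (m i) → E i),
    (∑ j : ∀ i, Fin (m i), ‖T fun i ↦ x i (j i)‖ ^ p) ^ (1 / p) ≤
      C * ∏ i, weakLpNorm 𝕜 p (x i)

theorem le_sInf_mul {s : Set ℝ} {a b : ℝ} (hs : s.Nonempty) (hb : 0 ≤ b)
    (h : ∀ c ∈ s, a ≤ c * b) : a ≤ sInf s * b := by
  rw [mul_comm, ← smul_eq_mul, ← Real.sInf_smul_of_nonneg hb]
  refine le_csInf hs.smul_set ?_
  rintro _ ⟨c, hc, rfl⟩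
  simpa only [smul_eq_mul, mul_comm b] using h c hc

theorem le_mul_rpow_one_div_iff {a b c p : ℝ} (ha : 0 ≤ a) (hb : 0 ≤ b) (hc : 0 ≤ c)
    (hp : 0 < p) : a ≤ c * b ^ (1 / p) ↔ a ^ p ≤ c ^ p * b := by
  rw [← Real.rpow_le_rpow_iff ha (by positivity) hp, Real.mul_rpow hc (by positivity), one_div,
    Real.rpow_inv_rpow hb hp.ne']

section WeakLpNorm

variable {𝕜 : Type*} [RCLike 𝕜] {E : Type*} [NormedAddCommGroup E] [NormedSpace 𝕜 E]
  {m : ℕ} {p : ℝ}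

theorem weakLpNorm_nonneg (x : Fin m → E) : 0 ≤ weakLpNorm 𝕜 p x :=
  Real.iSup_nonneg fun _ ↦ by positivity

theorem bddAbove_range_weakLpNorm (hp : 0 ≤ p) (x : Fin m → E) :
    BddAbove (Set.range fun φ : {φ : E →L[𝕜] 𝕜 // ‖φ‖ ≤ 1} ↦
      (∑ j, ‖φ.1 (x j)‖ ^ p) ^ (1 / p)) := by
  refine ⟨(∑ j, ‖x j‖ ^ p) ^ (1 / p), ?_⟩
  rintro _ ⟨φ, rfl⟩
  dsimp only
  gcongr with j
  simpa only [one_mul] using φ.1.le_of_opNorm_le φ.2 (x j)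

theorem sum_norm_rpow_le_weakLpNorm_rpow (hp : 0 < p) (x : Fin m → E)
    (φ : WeakDualUnitBall 𝕜 E) : ∑ j, ‖φ.1 (x j)‖ ^ p ≤ weakLpNorm 𝕜 p x ^ p := by
  have norm_le_one : ‖WeakDual.toStrongDual φ.1‖ ≤ 1 :=
    ContinuousLinearMap.opNorm_le_bound _ zero_le_one fun z ↦
      (φ.2 z).trans_eq (one_mul _).symm
  have le_weakLpNorm : (∑ j, ‖φ.1 (x j)‖ ^ p) ^ (1 / p) ≤ weakLpNorm 𝕜 p x :=
    le_ciSup (bddAbove_range_weakLpNorm hp.le x) ⟨WeakDual.toStrongDual φ.1, norm_le_one⟩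
  rwa [one_div, Real.rpow_inv_le_iff_of_pos (by positivity) (weakLpNorm_nonneg x) hp]
    at le_weakLpNorm

end WeakLpNorm

section DualBalls

variable {𝕜 : Type*} [RCLike 𝕜] {ι : Type*} [Fintype ι] {E : ι → Type*}
  [∀ i, NormedAddCommGroup (E i)] [∀ i, NormedSpace 𝕜 (E i)] {p : ℝ}

theorem continuous_prod_norm_rpow (hp : 0 ≤ p) (x : ∀ i, E i) :
    Continuous fun φ : ∀ i, WeakDualUnitBall 𝕜 (E i) ↦ ∏ i, ‖(φ i).1 (x i)‖ ^ p :=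
  continuous_finsetProd _ fun i _ ↦
    ((WeakDual.eval_continuous (x i)).comp
      (continuous_subtype_val.comp (continuous_apply i))).norm.rpow_const fun _ ↦ Or.inr hp

theorem integrable_prod_norm_rpow [MeasurableSpace (∀ i, WeakDualUnitBall 𝕜 (E i))]
    [OpensMeasurableSpace (∀ i, WeakDualUnitBall 𝕜 (E i))]
    (μ : Measure (∀ i, WeakDualUnitBall 𝕜 (E i))) [IsFiniteMeasure μ]
    (hp : 0 ≤ p) (x : ∀ i, E i) :
    Integrable (fun φ ↦ ∏ i, ‖(φ i).1 (x i)‖ ^ p) μ := by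
  refine .of_bound (continuous_prod_norm_rpow hp x).measurable.aestronglyMeasurable
    (∏ i, ‖x i‖ ^ p) (.of_forall fun φ ↦ ?_)
  rw [Real.norm_of_nonneg (by positivity)]
  gcongr with i
  exact (φ i).2 (x i)

theorem sum_prod_norm_rpow_le [DecidableEq ι] (hp : 0 < p) {m : ι → ℕ}
    (x : ∀ i, Fin (m i) → E i) (φ : ∀ i, WeakDualUnitBall 𝕜 (E i)) :
    ∑ j : ∀ i, Fin (m i), ∏ i, ‖(φ i).1 (x i (j i))‖ ^ p ≤
      (∏ i, weakLpNorm 𝕜 p (x i)) ^ p := by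
  rw [← Fintype.prod_sum fun i k ↦ ‖(φ i).1 (x i k)‖ ^ p,
    ← Real.finsetProd_rpow _ _ fun i _ ↦ weakLpNorm_nonneg (x i)]
  gcongr with i
  exact sum_norm_rpow_le_weakLpNorm_rpow hp (x i) (φ i)

theorem sum_integral_prod_norm_rpow_le [DecidableEq ι]
    [MeasurableSpace (∀ i, WeakDualUnitBall 𝕜 (E i))]
    [OpensMeasurableSpace (∀ i, WeakDualUnitBall 𝕜 (E i))]
    (μ : Measure (∀ i, WeakDualUnitBall 𝕜 (E i))) [IsProbabilityMeasure μ] (hp : 0 < p)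
    {m : ι → ℕ} (x : ∀ i, Fin (m i) → E i) :
    ∑ j : ∀ i, Fin (m i), ∫ φ, ∏ i, ‖(φ i).1 (x i (j i))‖ ^ p ∂μ ≤
      (∏ i, weakLpNorm 𝕜 p (x i)) ^ p := by
  have integrable (j : ∀ i, Fin (m i)) :=
    integrable_prod_norm_rpow μ hp.le fun i ↦ x i (j i)
  calc ∑ j : ∀ i, Fin (m i), ∫ φ, ∏ i, ‖(φ i).1 (x i (j i))‖ ^ p ∂μ
    _ = ∫ φ, ∑ j : ∀ i, Fin (m i), ∏ i, ‖(φ i).1 (x i (j i))‖ ^ p ∂μ :=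
        (integral_finsetSum _ fun j _ ↦ integrable j).symm
    _ ≤ ∫ _, (∏ i, weakLpNorm 𝕜 p (x i)) ^ p ∂μ :=
        integral_mono (integrable_finsetSum _ fun j _ ↦ integrable j) (integrable_const _)
          (sum_prod_norm_rpow_le hp x)
    _ = (∏ i, weakLpNorm 𝕜 p (x i)) ^ p := by
        rw [integral_const, probReal_univ, one_smul]

variable [DecidableEq ι] {F : Type*} [NormedAddCommGroup F] {T : (∀ i, E i) → F}

theorem SemiIntegralWith.fullySummingWith {C : ℝ} (hC : 0 ≤ C) (hp : 0 < p)
    (hT : SemiIntegralWith 𝕜 p C T) : FullySummingWith 𝕜 p C T := by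
  intro m x
  let : MeasurableSpace (∀ i, WeakDualUnitBall 𝕜 (E i)) := borel _
  have : BorelSpace (∀ i, WeakDualUnitBall 𝕜 (E i)) := ⟨rfl⟩
  obtain ⟨μ, _, -, norm_le⟩ := hT
  have prod_nonneg : 0 ≤ ∏ i, weakLpNorm 𝕜 p (x i) :=
    Finset.prod_nonneg fun i _ ↦ weakLpNorm_nonneg (x i)
  have norm_rpow_le (y : ∀ i, E i) :
      ‖T y‖ ^ p ≤ C ^ p * ∫ φ, ∏ i, ‖(φ i).1 (y i)‖ ^ p ∂μ :=
    (le_mul_rpow_one_div_iff (norm_nonneg _) (integral_nonneg fun φ ↦ by positivity) hC hp).1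
      (norm_le y)
  rw [one_div, Real.rpow_inv_le_iff_of_pos (by positivity) (by positivity) hp]
  calc ∑ j : ∀ i, Fin (m i), ‖T fun i ↦ x i (j i)‖ ^ p
    _ ≤ ∑ j : ∀ i, Fin (m i), C ^ p * ∫ φ, ∏ i, ‖(φ i).1 (x i (j i))‖ ^ p ∂μ :=
        Finset.sum_le_sum fun j _ ↦ norm_rpow_le fun i ↦ x i (j i)
    _ = C ^ p * ∑ j : ∀ i, Fin (m i), ∫ φ, ∏ i, ‖(φ i).1 (x i (j i))‖ ^ p ∂μ :=
        (Finset.mul_sum ..).symm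
    _ ≤ C ^ p * (∏ i, weakLpNorm 𝕜 p (x i)) ^ p := by
        gcongr
        exact sum_integral_prod_norm_rpow_le μ hp x
    _ = (C * ∏ i, weakLpNorm 𝕜 p (x i)) ^ p := (Real.mul_rpow hC prod_nonneg).symm

theorem fullySumming_of_semiIntegral_general (hp : 0 < p)
    (hT : ∃ C, 0 ≤ C ∧ SemiIntegralWith 𝕜 p C T) :
    FullySummingWith 𝕜 p (siNorm 𝕜 p T) T :=
  fun m x ↦ le_sInf_mul hT (Finset.prod_nonneg fun i _ ↦ weakLpNorm_nonneg (x i))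
    fun _ ⟨hC, hTC⟩ ↦ hTC.fullySummingWith hC hp m x

end DualBalls

/-- Every `p`-semi-integral continuous `n`-linear map (`n ≥ 2`) is fully
(multiple) `p`-summing, with `‖T‖_{fas,p} ≤ ‖T‖_{si,p}`. -/
theorem fullySumming_of_semiIntegral {𝕜 : Type*} [RCLike 𝕜] {E : Type*}
    [NormedAddCommGroup E] [NormedSpace 𝕜 E] [CompleteSpace E]
    {F : Type*} [NormedAddCommGroup F] [NormedSpace 𝕜 F] [CompleteSpace F]
    {n : ℕ} (hn : 2 ≤ n) {p : ℝ} (hp : 0 < p)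
    (T : ContinuousMultilinearMap 𝕜 (fun _ : Fin n => E) F)
    (hT : ∃ C, 0 ≤ C ∧ SemiIntegralWith 𝕜 p C ⇑T) :
    ∀ (m : ℕ) (x : Fin n → Fin m → E),
      (∑ j : Fin n → Fin m, ‖T (fun i => x i (j i))‖ ^ p) ^ (1 / p) ≤
        siNorm 𝕜 p ⇑T * ∏ k, weakLpNorm 𝕜 p (x k) :=
  fun m x ↦ fullySumming_of_semiIntegral_general hp hT (fun _ ↦ m) x
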